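/- For every integer r > 1, 5·WGS(r) = 9·GS(r), where GS(r) and WGS(r) denote the strong and weak Gallai-Schur numbers respectively. -/

import Mathlib

/-- A strong Gallai–Schur coloring of the interval `[1, m]` with color set `C`:
`χ` maps `[1, m]` into `C`, is surjective onto `C`, admits no monochromatic
solution of `a + b = c` (with `a = b` allowed), and admits no rainbow solution
of `a + b = c`. -/
def StrongGS (m : ℕ) (C : Finset ℕ) (χ : ℕ → ℕ) : Prop :=
  (∀ x ∈ Finset.Icc 1 m, χ x ∈ C) ∧
  (∀ i ∈ C, ∃ x ∈ Finset.Icc 1 m, χ x = i) ∧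
  (∀ a ∈ Finset.Icc 1 m, ∀ b ∈ Finset.Icc 1 m, ∀ c ∈ Finset.Icc 1 m,
      a + b = c → ¬(χ a = χ b ∧ χ b = χ c)) ∧
  (∀ a ∈ Finset.Icc 1 m, ∀ b ∈ Finset.Icc 1 m, ∀ c ∈ Finset.Icc 1 m,
      a + b = c → ¬(χ a ≠ χ b ∧ χ a ≠ χ c ∧ χ b ≠ χ c))

/-- A weak Gallai–Schur coloring of the interval `[1, m]` with color set `C`:
`χ` maps `[1, m]` into `C`, is surjective onto `C`, admits no monochromatic
solution of `a + b = c` with `a`, `b`, `c` pairwise distinct, and admits no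
rainbow solution of `a + b = c`. -/
def WeakGS (m : ℕ) (C : Finset ℕ) (χ : ℕ → ℕ) : Prop :=
  (∀ x ∈ Finset.Icc 1 m, χ x ∈ C) ∧
  (∀ i ∈ C, ∃ x ∈ Finset.Icc 1 m, χ x = i) ∧
  (∀ a ∈ Finset.Icc 1 m, ∀ b ∈ Finset.Icc 1 m, ∀ c ∈ Finset.Icc 1 m,
      a + b = c → a ≠ b → a ≠ c → b ≠ c → ¬(χ a = χ b ∧ χ b = χ c)) ∧
  (∀ a ∈ Finset.Icc 1 m, ∀ b ∈ Finset.Icc 1 m, ∀ c ∈ Finset.Icc 1 m,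
      a + b = c → ¬(χ a ≠ χ b ∧ χ a ≠ χ c ∧ χ b ≠ χ c))

/-- The strong Gallai–Schur number `GS r`: the least `n` such that no strong
Gallai–Schur `r`-coloring of `[1, m]` exists for any `m ≥ n`. -/
noncomputable def GS (r : ℕ) : ℕ :=
  sInf {n : ℕ | ∀ m, n ≤ m → ∀ χ : ℕ → ℕ, ¬ StrongGS m (Finset.Icc 1 r) χ}

/-- The weak Gallai–Schur number `WGS r`: the least `n` such that no weak
Gallai–Schur `r`-coloring of `[1, m]` exists for any `m ≥ n`. -/
noncomputable def WGS (r : ℕ) : ℕ :=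
  sInf {n : ℕ | ∀ m, n ≤ m → ∀ χ : ℕ → ℕ, ¬ WeakGS m (Finset.Icc 1 r) χ}

namespace GSProof

/-- no rainbow sum -/
def RF (m : ℕ) (χ : ℕ → ℕ) : Prop :=
  ∀ a b, 1 ≤ a → 1 ≤ b → a + b ≤ m → χ a = χ b ∨ χ a = χ (a + b) ∨ χ b = χ (a + b)

/-- no monochromatic sum -/
def SF (m : ℕ) (χ : ℕ → ℕ) : Prop :=
  ∀ a b, 1 ≤ a → 1 ≤ b → a + b ≤ m → ¬ (χ a = χ b ∧ χ b = χ (a + b))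

/-- no monochromatic sum of distinct numbers -/
def WF (m : ℕ) (χ : ℕ → ℕ) : Prop :=
  ∀ a b, 1 ≤ a → 1 ≤ b → a ≠ b → a + b ≤ m → ¬ (χ a = χ b ∧ χ b = χ (a + b))

/-- the coloring of nonmultiples of `d` is symmetric and periodic mod `d` -/
def Sy (m d : ℕ) (χ : ℕ → ℕ) : Prop :=
  ∀ x y, 1 ≤ x → 1 ≤ y → x ≤ m → y ≤ m → ¬ (d : ℤ) ∣ x →
    ((d : ℤ) ∣ (x : ℤ) - y ∨ (d : ℤ) ∣ (x : ℤ) + y) → χ x = χ y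

def cols (m : ℕ) (χ : ℕ → ℕ) : Finset ℕ := (Finset.Icc 1 m).image χ

def f : ℕ → ℕ
  | 0 => 1
  | 1 => 2
  | (n + 2) => 5 * f n

def g : ℕ → ℕ
  | 0 => 1
  | 1 => 3
  | (n + 2) => 9 * f n

lemma dvd_conv {d a b : ℤ} (h : d ∣ a) (e : b = a) : d ∣ b := e ▸ h

lemma f_pos (n : ℕ) : 1 ≤ f n := by
  induction n using f.induct <;> simp [f]; omega

lemma f_two (n : ℕ) : 2 * f n ≤ f (n + 1) ∧ f (n + 1) ≤ 3 * f n := by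
  induction n using f.induct with
  | case1 => simp [f]
  | case2 => simp [f]
  | case3 n ih =>
    have h1 : f (n + 2) = 5 * f n := rfl
    have h2 : f (n + 2 + 1) = 5 * f (n + 1) := rfl
    change 2 * f (n + 2) ≤ f (n + 2 + 1) ∧ f (n + 2 + 1) ≤ 3 * f (n + 2)
    omega

lemma f_mul (c e : ℕ) : f c * f e ≤ f (c + e) := by
  induction c using f.induct with
  | case1 => simp [f]
  | case2 => have := (f_two e).1; rw [add_comm 1 e]; simpa [f] using this
  | case3 n ih =>
    have h1 : f (n + 2) = 5 * f n := rfl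
    have h2 : f (n + 2 + e) = 5 * f (n + e) := by
      rw [show n + 2 + e = n + e + 2 by ring]; rfl
    rw [h1, h2]; nlinarith

lemma fg_mul (c e : ℕ) (hc : 1 ≤ c) (he : 1 ≤ e) : f c * g e ≤ g (c + e) := by
  obtain ⟨c, rfl⟩ := Nat.exists_eq_add_of_le' hc
  match e, he with
  | 1, _ =>
    have := (f_two c).2
    change f (c + 1) * 3 ≤ 9 * f c
    omega
  | (n + 2), _ =>
    have := f_mul (c + 1) n
    change f (c + 1) * (9 * f n) ≤ 9 * f (c + 1 + n)
    nlinarith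

lemma mem_cols {m : ℕ} {χ : ℕ → ℕ} {i : ℕ} : i ∈ cols m χ ↔ ∃ x, 1 ≤ x ∧ x ≤ m ∧ χ x = i := by
  simp [cols, and_assoc]

lemma step (m : ℕ) (χ : ℕ → ℕ) (h : RF m χ) (R B b k : ℕ) (hR : χ 1 = R) (hb : χ b = B)
    (hb1 : 1 ≤ b) (hBR : B ≠ R) (hbk : b < k) (hk : 1 ≤ k) (hkR : χ k ≠ R) (hkB : χ k ≠ B)
    (hmin : ∀ j, 1 ≤ j → j < k → χ j = R ∨ χ j = B) (n : ℕ) (hkn : k ≤ n) :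
    n ≤ m → ∃ d : ℕ, 2 ≤ d ∧ d ≤ n ∧
      (∀ s : ℕ, 1 ≤ s → s ≤ n → χ s ≠ R → χ s ≠ B → (d : ℤ) ∣ s) ∧ Sy n d χ := by
  induction n, hkn using Nat.le_induction with
  | base =>
    intro hm
    refine ⟨k, by omega, le_rfl, ?_, ?_⟩
    · intro s hs1 hs2 h1 h2
      have : s = k := by
        by_contra hne
        have := hmin s hs1 (by omega)
        tauto
      subst this; exact dvd_refl _
    · intro x y hx hy hxk hyk hdx hxy
      have hxk' : x < k := by
        rcases hxk.lt_or_eq with h1 | h1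
        · exact h1
        · subst h1; exact absurd (dvd_refl _) hdx
      rcases hxy with ⟨t, ht⟩ | ⟨t, ht⟩
      · have : t = 0 := by
          have h1 : t < 1 := by nlinarith
          have h2 : -1 < t := by
            by_contra hc
            have : t ≤ -1 := by omega
            nlinarith
          omega
        subst this
        have : x = y := by omega
        rw [this]
      · have : t = 1 := by
          have h1 : t < 2 := by
            by_contra hc
            have : 2 ≤ t := by omega
            nlinarith
          have h2 : 0 < t := by
            by_contra hc
            have : t ≤ 0 := by omega
            nlinarith
          omega
        subst this
        have hs : x + y = k := by omega
        have h1 := h x y hx hy (by omega)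
        rw [hs] at h1
        have h2 := hmin x hx hxk'
        have h3 := hmin y hy (by omega)
        grind
  | succ n hkn ih =>
    intro hm
    obtain ⟨d, hd2, hdn, hS, hsy⟩ := ih (by omega)
    have hnm : ∀ x : ℕ, 1 ≤ x → x ≤ n → ¬ (d : ℤ) ∣ x → χ x = R ∨ χ x = B := by
      intro x h1 h2 h3
      by_contra hc
      push Not at hc
      exact h3 (hS x h1 h2 hc.1 hc.2)
    by_cases hN : (d : ℤ) ∣ ((n + 1 : ℕ) : ℤ)
    · refine ⟨d, hd2, by omega, ?_, ?_⟩
      · intro s h1 h2 h3 h4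
        rcases h2.lt_or_eq with h5 | h5
        · exact hS s h1 (by omega) h3 h4
        · rw [h5]; exact hN
      · intro x y hx hy hxk hyk hdx hxy
        have hdy : ¬ (d : ℤ) ∣ y := by
          intro hy'
          rcases hxy with h1 | h1
          · exact hdx ((dvd_sub_left hy').1 h1)
          · exact hdx ((dvd_add_left hy').1 h1)
        have hx' : x ≠ n + 1 := by rintro rfl; exact hdx hN
        have hy' : y ≠ n + 1 := by rintro rfl; exact hdy hN
        exact hsy x y hx hy (by omega) (by omega) hdx hxy
    by_cases hc : χ (n + 1) = R ∨ χ (n + 1) = B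
    · have hdk : (d : ℤ) ∣ k := hS k hk hkn hkR hkB
      have key : ∀ y : ℕ, 1 ≤ y → y ≤ n → ((d : ℤ) ∣ ((n + 1 : ℕ) : ℤ) - y ∨ (d : ℤ) ∣ ((n + 1 : ℕ) : ℤ) + y) →
          χ (n + 1) = χ y := by
        intro y hy1 hyn hy
        have e : ((n + 1 - k : ℕ) : ℤ) = ((n + 1 : ℕ) : ℤ) - k := by omega
        have hz : ¬ (d : ℤ) ∣ ((n + 1 - k : ℕ) : ℤ) := by
          rw [e]; intro h'; exact hN ((dvd_sub_left hdk).1 h')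
        have h1 : χ (n + 1 - k) = χ y := by
          apply hsy _ _ (by omega) hy1 (by omega) hyn hz
          rw [e]
          rcases hy with h' | h'
          · left
            have := dvd_sub h' hdk
            exact dvd_conv this (by ring)
          · right
            have := dvd_sub h' hdk
            exact dvd_conv this (by ring)
        have h2 := h (n + 1 - k) k (by omega) hk (by omega)
        rw [show n + 1 - k + k = n + 1 by omega] at h2
        have h3 := hnm (n + 1 - k) (by omega) (by omega) hz
        grind
      refine ⟨d, hd2, by omega, ?_, ?_⟩
      · intro s h1 h2 h3 h4
        rcases h2.lt_or_eq with h5 | h5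
        · exact hS s h1 (by omega) h3 h4
        · subst h5; tauto
      · intro x y hx hy hxk hyk hdx hxy
        rcases hxk.lt_or_eq with hx' | hx' <;> rcases hyk.lt_or_eq with hy' | hy'
        · exact hsy x y hx hy (by omega) (by omega) hdx hxy
        · subst hy'
          symm; apply key x hx (by omega)
          rcases hxy with h' | h'
          · left; rw [← neg_sub]; exact (dvd_neg).2 h'
          · right; rw [add_comm]; exact h'
        · subst hx'; exact (key y hy (by omega) hxy)
        · rw [hx', hy']
    push Not at hc
    set N : ℤ := ((n + 1 : ℕ) : ℤ) with hNdef
    have hd0 : (0 : ℤ) < d := by omega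
    -- the periodic extension
    let ψ : ℤ → ℕ := fun z => χ ((z % d).toNat)
    have res : ∀ z : ℤ, ¬ (d : ℤ) ∣ z → ∃ j : ℕ, 1 ≤ j ∧ j ≤ n ∧ (j : ℤ) < d ∧ (d : ℤ) ∣ z - j ∧ ¬ (d : ℤ) ∣ j ∧ ψ z = χ j := by
      intro z hz
      have h1 := Int.emod_nonneg z hd0.ne'
      have h2 := Int.emod_lt_of_pos z hd0
      have h3 : z % d ≠ 0 := fun h' => hz (Int.dvd_of_emod_eq_zero h')
      have h4 : ((z % d).toNat : ℤ) = z % d := by omega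
      have h5 : (d : ℤ) ∣ z - ((z % d).toNat : ℤ) := by rw [h4]; exact Int.dvd_self_sub_emod
      refine ⟨(z % d).toNat, by omega, by omega, by omega, h5, ?_, rfl⟩
      intro h'; exact hz ((dvd_sub_left h').1 h5)
    have psi_eq : ∀ (z : ℤ) (x : ℕ), 1 ≤ x → x ≤ n → ¬ (d : ℤ) ∣ z →
        ((d : ℤ) ∣ z - x ∨ (d : ℤ) ∣ z + x) → ψ z = χ x := by
      intro z x hx1 hxn hz hzx
      obtain ⟨j, hj1, hjn, hjd, hzj, hdj, hj⟩ := res z hz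
      rw [hj]
      apply hsy j x hj1 hx1 hjn hxn hdj
      rcases hzx with h' | h'
      · left; have := dvd_sub h' hzj; exact dvd_conv this (by ring)
      · right; have := dvd_sub h' hzj; exact dvd_conv this (by ring)
    have trans : ∀ z : ℤ, ¬ (d : ℤ) ∣ z → ¬ (d : ℤ) ∣ z + N → ψ (z + N) = ψ z := by
      intro z hz hzN
      obtain ⟨j, hj1, hjn, hjd, hzj, hdj, hj⟩ := res (-z) (by rwa [dvd_neg])
      have e1 : ψ z = χ j := by
        apply psi_eq z j hj1 hjn hz
        right; have := dvd_neg.2 hzj; exact dvd_conv this (by ring)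
      have e3 : ((n + 1 - j : ℕ) : ℤ) = N - j := by omega
      have h5 : (d : ℤ) ∣ z + N - ((n + 1 - j : ℕ) : ℤ) := by
        rw [e3]; have := dvd_neg.2 hzj; exact dvd_conv this (by ring)
      have e2 : ψ (z + N) = χ (n + 1 - j) :=
        psi_eq (z + N) (n + 1 - j) (by omega) (by omega) hzN (Or.inl h5)
      have h6 : ¬ (d : ℤ) ∣ ((n + 1 - j : ℕ) : ℤ) := fun h' => hzN ((dvd_sub_left h').1 h5)
      have h1 := hnm j hj1 hjn hdj
      have h2 := hnm (n + 1 - j) (by omega) (by omega) h6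
      have h3 := h j (n + 1 - j) hj1 (by omega) (by omega)
      rw [show j + (n + 1 - j) = n + 1 by omega] at h3
      grind
    have per : ∀ z t : ℤ, ψ (z + t * d) = ψ z := by
      intro z t; simp [ψ]
    set d' := Int.gcd d N with hd'
    have hd'd : (d' : ℤ) ∣ d := Int.gcd_dvd_left ..
    have hd'N : (d' : ℤ) ∣ N := Int.gcd_dvd_right ..
    have hd'pos : 0 < d' := Int.gcd_pos_of_ne_zero_left _ hd0.ne'
    have hd'le : (d' : ℤ) ≤ d := Int.le_of_dvd hd0 hd'd
    by_cases h1 : d' = 1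
    · exfalso
      have hcop : IsCoprime (d : ℤ) N := Int.isCoprime_iff_gcd_eq_one.2 h1
      have all : ∀ a : ℕ, 1 ≤ a → a < d → ψ (a * N) = ψ N := by
        intro a ha
        induction a, ha using Nat.le_induction with
        | base => intro _; simp
        | succ a ha ih2 =>
          intro had
          have nd : ∀ a : ℕ, 1 ≤ a → a < d → ¬ (d : ℤ) ∣ a * N := by
            intro a h1 h2 h3
            have := hcop.dvd_of_dvd_mul_right h3
            have := Int.le_of_dvd (by omega) this
            omega
          have h2 := nd (a + 1) (by omega) had
          push_cast at h2 ⊢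
          rw [add_mul, one_mul] at h2 ⊢
          rw [trans _ (nd a ha (by omega)) h2]
          exact ih2 (by omega)
      have all2 : ∀ z : ℤ, ¬ (d : ℤ) ∣ z → ψ z = ψ N := by
        intro z hz
        obtain ⟨u, v, huv⟩ := hcop
        have hzv : ¬ (d : ℤ) ∣ z * v := by
          intro h'
          apply hz
          have : z = (z * u) * d + (z * v) * N := by linear_combination (-z) * huv
          rw [this]
          exact dvd_add (Dvd.intro_left _ rfl) (h'.mul_right _)
        obtain ⟨j, hj1, hjn, hjd, ⟨t, ht⟩, hdj, hj⟩ := res (z * v) hzv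
        have := all j hj1 (by omega)
        rw [← this]
        have e : z = j * N + (z * u + t * N) * d := by
          linear_combination (-z) * huv + N * ht
        rw [e, per]
      have allR : ∀ x : ℕ, 1 ≤ x → x ≤ n → ¬ (d : ℤ) ∣ x → χ x = R := by
        intro x h1 h2 h3
        have hd1 : ¬ (d : ℤ) ∣ ((1 : ℕ) : ℤ) := by
          intro h'
          have := Int.le_of_dvd (by omega) h'
          omega
        have e1 := psi_eq x x h1 h2 h3 (by simp)
        have e2 := psi_eq (1 : ℕ) 1 (by omega) (by omega) hd1 (by simp)
        rw [← e1, all2 _ h3, ← all2 _ hd1, e2, hR]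
      have hdb : (d : ℤ) ∣ b := by
        by_contra hdb
        have := allR b hb1 (by omega) hdb
        exact hBR (hb ▸ this)
      have e3 : ((n + 1 - b : ℕ) : ℤ) = N - b := by omega
      have h3 : χ (n + 1 - b) = R := by
        apply allR _ (by omega) (by omega)
        rw [e3]; intro h'; exact hN ((dvd_sub_left hdb).1 h')
      have h4 := h b (n + 1 - b) hb1 (by omega) (by omega)
      rw [show b + (n + 1 - b) = n + 1 by omega] at h4
      grind
    · have hnd : ∀ z : ℤ, ¬ (d' : ℤ) ∣ z → ¬ (d : ℤ) ∣ z := fun z hz h' => hz (hd'd.trans h')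
      have tr1 : ∀ z : ℤ, ¬ (d' : ℤ) ∣ z → ∀ t : ℤ, ψ (z + t * N) = ψ z := by
        intro z hz t
        have nd : ∀ t : ℤ, ¬ (d' : ℤ) ∣ z + t * N := by
          intro t h'; exact hz ((dvd_add_left (hd'N.mul_left t)).1 h')
        induction t using Int.induction_on with
        | zero => simp
        | succ i ih2 =>
          rw [← ih2, add_mul, one_mul, ← add_assoc]
          apply trans _ (hnd _ (nd _))
          have := hnd _ (nd (i + 1))
          rwa [add_mul, one_mul, ← add_assoc] at this
        | pred i ih2 =>
          rw [← ih2]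
          have e : z + (-(i : ℤ)) * N = (z + (-(i : ℤ) - 1) * N) + N := by ring
          have h5 := hnd _ (nd (-(i : ℤ)))
          rw [e] at h5 ⊢
          exact (trans _ (hnd _ (nd _)) h5).symm
      have tr2 : ∀ z w : ℤ, ¬ (d' : ℤ) ∣ z → (d' : ℤ) ∣ w - z → ψ w = ψ z := by
        rintro z w hz ⟨t, ht⟩
        have hb' := Int.gcd_eq_gcd_ab d N
        rw [← hd'] at hb'
        have e : w = (z + (t * Int.gcdB d N) * N) + (t * Int.gcdA d N) * d := by
          rw [hb'] at ht
          linear_combination ht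
        rw [e, per, tr1 z hz]
      refine ⟨d', by omega, by omega, ?_, ?_⟩
      · intro s h1 h2 h3 h4
        rcases h2.lt_or_eq with h5 | h5
        · exact hd'd.trans (hS s h1 (by omega) h3 h4)
        · rw [h5]; exact hd'N
      · intro x y hx hy hxk hyk hdx hxy
        have hdy : ¬ (d' : ℤ) ∣ y := by
          intro hy'
          rcases hxy with h1 | h1
          · exact hdx ((dvd_sub_left hy').1 h1)
          · exact hdx ((dvd_add_left hy').1 h1)
        have hx' : x ≠ n + 1 := by rintro rfl; exact hdx hd'N
        have hy' : y ≠ n + 1 := by rintro rfl; exact hdy hd'N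
        have e1 := psi_eq x x hx (by omega) (hnd _ hdx) (by simp)
        rw [← e1]
        rcases hxy with h1 | h1
        · rw [← psi_eq y y hy (by omega) (hnd _ hdy) (by simp)]
          exact tr2 _ _ hdy h1
        · have hdy' : ¬ (d' : ℤ) ∣ -(y : ℤ) := by rwa [dvd_neg]
          rw [← psi_eq (-y) y hy (by omega) (hnd _ hdy') (by simp)]
          exact tr2 _ _ hdy' (by simpa using h1)

lemma struct (m : ℕ) (χ : ℕ → ℕ) (h : RF m χ) (hc : 3 ≤ (cols m χ).card) :
    ∃ d : ℕ, 2 ≤ d ∧ d ≤ m ∧ Sy m d χ ∧ (cols (d - 1) χ).card ≤ 2 := by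
  classical
  have hb : ∃ b, 1 ≤ b ∧ b ≤ m ∧ χ b ≠ χ 1 := by
    by_contra! hcon
    have : cols m χ ⊆ {χ 1} := by
      intro i hi
      obtain ⟨x, h1, h2, rfl⟩ := mem_cols.1 hi
      simp [hcon x h1 h2]
    have := Finset.card_le_card this
    simp at this; omega
  obtain ⟨hb1, hbm, hbR⟩ := Nat.find_spec hb
  have hbmin := fun j (hj : j < Nat.find hb) => Nat.find_min hb hj
  generalize Nat.find hb = b at *
  have hk : ∃ k, 1 ≤ k ∧ k ≤ m ∧ χ k ≠ χ 1 ∧ χ k ≠ χ b := by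
    by_contra! hcon
    have : cols m χ ⊆ {χ 1, χ b} := by
      intro i hi
      obtain ⟨x, h1, h2, rfl⟩ := mem_cols.1 hi
      by_cases h3 : χ x = χ 1
      · simp [h3]
      · simp [hcon x h1 h2 h3]
    have := (Finset.card_le_card this).trans Finset.card_le_two
    omega
  obtain ⟨hk1, hkm, hkR, hkB⟩ := Nat.find_spec hk
  have hkmin := fun j (hj : j < Nat.find hk) => Nat.find_min hk hj
  generalize Nat.find hk = k at *
  have hbk : b < k := by
    rcases lt_trichotomy b k with h1 | h1 | h1
    · exact h1
    · subst h1; exact absurd rfl hkB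
    · exact absurd ⟨hk1, hkm, hkR⟩ (hbmin k h1)
  obtain ⟨d, hd2, hdm, hS, hsy⟩ := step m χ h (χ 1) (χ b) b k rfl rfl hb1 hbR hbk hk1 hkR hkB
    (by
      intro j hj1 hj
      have := hkmin j hj
      by_contra hcon
      push Not at hcon
      exact this ⟨hj1, by omega, hcon⟩) m hkm le_rfl
  refine ⟨d, hd2, hdm, hsy, ?_⟩
  have : cols (d - 1) χ ⊆ {χ 1, χ b} := by
    intro i hi
    obtain ⟨x, h1, h2, rfl⟩ := mem_cols.1 hi
    by_contra hcon
    simp only [Finset.mem_insert, Finset.mem_singleton, not_or] at hcon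
    have := Int.le_of_dvd (by omega) (hS x h1 (by omega) hcon.1 hcon.2)
    omega
  exact (Finset.card_le_card this).trans Finset.card_le_two

lemma cols_split (m d : ℕ) (χ : ℕ → ℕ) (hd : 2 ≤ d) (hdm : d ≤ m) (hs : Sy m d χ) :
    cols m χ = cols (d - 1) χ ∪ cols (m / d) (fun x => χ (d * x)) := by
  ext i
  simp only [Finset.mem_union, mem_cols]
  constructor
  · rintro ⟨x, h1, h2, rfl⟩
    by_cases hx : d ∣ x
    · right
      obtain ⟨y, rfl⟩ := hx
      refine ⟨y, Nat.pos_of_mul_pos_left h1, ?_, rfl⟩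
      rw [Nat.le_div_iff_mul_le (by omega)]; linarith
    · left
      have h3 := Nat.mod_lt x (show d > 0 by omega)
      have h4 : x % d ≠ 0 := fun h' => hx (Nat.dvd_of_mod_eq_zero h')
      refine ⟨x % d, by omega, by omega, ?_⟩
      symm
      apply hs _ _ h1 (by omega) h2 (by omega) (by exact_mod_cast hx)
      left
      push_cast
      exact Int.dvd_self_sub_emod
  · rintro (⟨x, h1, h2, rfl⟩ | ⟨x, h1, h2, rfl⟩)
    · exact ⟨x, h1, by omega, rfl⟩
    · refine ⟨d * x, Nat.mul_pos (by omega) h1, ?_, rfl⟩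
      exact (Nat.mul_le_mul_left d h2).trans (Nat.mul_div_le m d)

lemma RF_mono {m n : ℕ} {χ : ℕ → ℕ} (h : RF m χ) (hn : n ≤ m) : RF n χ :=
  fun a b h1 h2 h3 => h a b h1 h2 (by omega)

lemma mul_le_of_le_div {m d x : ℕ} (h : x ≤ m / d) : d * x ≤ m :=
  (Nat.mul_le_mul_left d h).trans (Nat.mul_div_le m d)

lemma RF_div {m d : ℕ} {χ : ℕ → ℕ} (h : RF m χ) (hd : 1 ≤ d) : RF (m / d) (fun x => χ (d * x)) := by
  intro a b h1 h2 h3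
  have := mul_le_of_le_div h3
  have := h (d * a) (d * b) (Nat.mul_pos hd h1) (Nat.mul_pos hd h2) (by linarith)
  simpa [mul_add] using this

lemma two_cols {m : ℕ} {χ : ℕ → ℕ} (hc : (cols m χ).card = 2) :
    ∃ p : ℕ → Bool, ∀ x y, 1 ≤ x → x ≤ m → 1 ≤ y → y ≤ m → (χ x = χ y ↔ p x = p y) := by
  obtain ⟨R, B, hne, he⟩ := Finset.card_eq_two.1 hc
  have hx : ∀ x, 1 ≤ x → x ≤ m → χ x = R ∨ χ x = B := by
    intro x h1 h2
    have : χ x ∈ cols m χ := mem_cols.2 ⟨x, h1, h2, rfl⟩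
    rw [he] at this; simpa using this
  refine ⟨fun x => decide (χ x = R), ?_⟩
  intro x y h1 h2 h3 h4
  have := hx x h1 h2
  have := hx y h3 h4
  grind

lemma one_col {m : ℕ} {χ : ℕ → ℕ} (hc : (cols m χ).card = 1) :
    ∀ x y, 1 ≤ x → x ≤ m → 1 ≤ y → y ≤ m → χ x = χ y := by
  obtain ⟨R, he⟩ := Finset.card_eq_one.1 hc
  have hx : ∀ x, 1 ≤ x → x ≤ m → χ x = R := by
    intro x h1 h2
    have : χ x ∈ cols m χ := mem_cols.2 ⟨x, h1, h2, rfl⟩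
    rw [he] at this; simpa using this
  intro x y h1 h2 h3 h4
  rw [hx x h1 h2, hx y h3 h4]

lemma zero_col {m : ℕ} {χ : ℕ → ℕ} (hc : (cols m χ).card = 0) : m = 0 := by
  by_contra hm
  have : χ 1 ∈ cols m χ := mem_cols.2 ⟨1, le_rfl, by omega, rfl⟩
  rw [Finset.card_eq_zero.1 hc] at this
  simp at this

lemma cols_pos {m : ℕ} {χ : ℕ → ℕ} (hm : 1 ≤ m) : 1 ≤ (cols m χ).card := by
  by_contra hc
  have := zero_col (χ := χ) (m := m) (by omega)
  omega

lemma five_bool (m : ℕ) (p : ℕ → Bool) (hm : 5 ≤ m)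
    (h : ∀ a b, 1 ≤ a → 1 ≤ b → a + b ≤ m → ¬ (p a = p b ∧ p b = p (a + b))) : False := by
  have h1 := h 1 1 (by omega) (by omega) (by omega)
  have h2 := h 2 2 (by omega) (by omega) (by omega)
  have h3 := h 1 3 (by omega) (by omega) (by omega)
  have h4 := h 1 4 (by omega) (by omega) (by omega)
  have h5 := h 2 3 (by omega) (by omega) (by omega)
  norm_num at h1 h2 h3 h4 h5
  revert h1 h2 h3 h4 h5
  cases p 1 <;> cases p 2 <;> cases p 3 <;> cases p 4 <;> cases p 5 <;> simp

lemma nine_bool (m : ℕ) (p : ℕ → Bool) (hm : 9 ≤ m)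
    (h : ∀ a b, 1 ≤ a → 1 ≤ b → a ≠ b → a + b ≤ m → ¬ (p a = p b ∧ p b = p (a + b))) : False := by
  have key : ∀ a b c : ℕ, 1 ≤ a → a < b → a + b = c → c ≤ 9 → ¬ (p a = p b ∧ p b = p c) := by
    intro a b c h1 h2 h3 h4
    subst h3
    exact h a b h1 (by omega) (by omega) (by omega)
  have h12 := key 1 2 3 (by omega) (by omega) rfl (by omega)
  have h13 := key 1 3 4 (by omega) (by omega) rfl (by omega)
  have h14 := key 1 4 5 (by omega) (by omega) rfl (by omega)
  have h15 := key 1 5 6 (by omega) (by omega) rfl (by omega)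
  have h16 := key 1 6 7 (by omega) (by omega) rfl (by omega)
  have h17 := key 1 7 8 (by omega) (by omega) rfl (by omega)
  have h18 := key 1 8 9 (by omega) (by omega) rfl (by omega)
  have h23 := key 2 3 5 (by omega) (by omega) rfl (by omega)
  have h24 := key 2 4 6 (by omega) (by omega) rfl (by omega)
  have h25 := key 2 5 7 (by omega) (by omega) rfl (by omega)
  have h26 := key 2 6 8 (by omega) (by omega) rfl (by omega)
  have h27 := key 2 7 9 (by omega) (by omega) rfl (by omega)
  have h34 := key 3 4 7 (by omega) (by omega) rfl (by omega)
  have h35 := key 3 5 8 (by omega) (by omega) rfl (by omega)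
  have h36 := key 3 6 9 (by omega) (by omega) rfl (by omega)
  have h45 := key 4 5 9 (by omega) (by omega) rfl (by omega)
  clear key h hm
  generalize p 1 = p1 at *
  generalize p 2 = p2 at *
  generalize p 3 = p3 at *
  generalize p 4 = p4 at *
  generalize p 5 = p5 at *
  generalize p 6 = p6 at *
  generalize p 7 = p7 at *
  generalize p 8 = p8 at *
  generalize p 9 = p9 at *
  cases p1 <;> cases p2 <;> simp_all <;> cases p3 <;> simp_all <;> cases p4 <;> simp_all

lemma strong_upper (m : ℕ) : ∀ χ : ℕ → ℕ, RF m χ → SF m χ → m + 1 ≤ f (cols m χ).card := by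
  induction m using Nat.strong_induction_on with
  | _ m ih =>
  intro χ hr hs
  rcases Nat.lt_or_ge (cols m χ).card 3 with hc | hc
  · interval_cases hcc : (cols m χ).card
    · have := zero_col hcc
      simp [f, this]
    · have h1 := one_col hcc
      simp only [f]
      by_contra hm
      exact hs 1 1 (by omega) (by omega) (by omega)
        ⟨rfl, h1 _ _ (by omega) (by omega) (by omega) (by omega)⟩
    · obtain ⟨p, hp⟩ := two_cols hcc
      simp only [f]
      by_contra hm
      apply five_bool m p (by omega)
      intro a b h1 h2 h3 h4
      apply hs a b h1 h2 h3
      rwa [hp a b (by omega) (by omega) (by omega) (by omega),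
        hp b (a + b) (by omega) (by omega) (by omega) (by omega)]
  · obtain ⟨d, hd2, hdm, hsy, -⟩ := struct m χ hr hc
    have i1 := ih (d - 1) (by omega) χ (RF_mono hr (by omega))
      (fun a b h1 h2 h3 => hs a b h1 h2 (by omega))
    have i2 := ih (m / d) (Nat.div_lt_self (by omega) (by omega)) (fun x => χ (d * x))
      (RF_div hr (by omega)) (by
        intro a b h1 h2 h3
        have := mul_le_of_le_div h3
        have := hs (d * a) (d * b) (Nat.mul_pos (by omega) h1) (Nat.mul_pos (by omega) h2)
          (by linarith)
        simpa [mul_add] using this)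
    have hdisj : Disjoint (cols (d - 1) χ) (cols (m / d) (fun x => χ (d * x))) := by
      rw [Finset.disjoint_left]
      intro i h1 h2
      obtain ⟨x, hx1, hx2, rfl⟩ := mem_cols.1 h1
      obtain ⟨k, hk1, hk2, hk⟩ := mem_cols.1 h2
      have hkm := mul_le_of_le_div hk2
      have hdk : d * 1 ≤ d * k := Nat.mul_le_mul_left d hk1
      have hx : ¬ (d : ℤ) ∣ x := fun h' => by
        have := Int.le_of_dvd (by omega) h'
        omega
      have e : χ x = χ (d * k - x) := by
        apply hsy x (d * k - x) hx1 (by omega) (by omega) (by omega) hx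
        right
        refine ⟨k, ?_⟩
        push_cast [Nat.cast_sub (show x ≤ d * k by omega)]
        ring
      apply hs x (d * k - x) hx1 (by omega) (by omega)
      rw [show x + (d * k - x) = d * k by omega]
      exact ⟨e, by rw [← e, hk]⟩
    rw [cols_split m d χ hd2 hdm hsy, Finset.card_union_of_disjoint hdisj]
    refine le_trans ?_ (f_mul _ _)
    have h1 := Nat.lt_mul_div_succ m (show 0 < d by omega)
    calc m + 1 ≤ d * (m / d + 1) := h1
      _ ≤ _ := Nat.mul_le_mul (by omega) i2

lemma weak_upper (m : ℕ) : ∀ χ : ℕ → ℕ, RF m χ → WF m χ → m + 1 ≤ g (cols m χ).card := by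
  induction m using Nat.strong_induction_on with
  | _ m ih =>
  intro χ hr hs
  rcases Nat.lt_or_ge (cols m χ).card 3 with hc | hc
  · interval_cases hcc : (cols m χ).card
    · have := zero_col hcc
      simp [g, this]
    · have h1 := one_col hcc
      simp only [g]
      by_contra hm
      exact hs 1 2 (by omega) (by omega) (by omega) (by omega)
        ⟨h1 _ _ (by omega) (by omega) (by omega) (by omega),
          h1 _ _ (by omega) (by omega) (by omega) (by omega)⟩
    · obtain ⟨p, hp⟩ := two_cols hcc
      simp only [g, f]
      by_contra hm
      apply nine_bool m p (by omega)
      intro a b h1 h2 hab h3 h4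
      apply hs a b h1 h2 hab h3
      rwa [hp a b (by omega) (by omega) (by omega) (by omega),
        hp b (a + b) (by omega) (by omega) (by omega) (by omega)]
  · obtain ⟨d, hd2, hdm, hsy, hA2⟩ := struct m χ hr hc
    have hlt := Nat.lt_mul_div_succ m (show 0 < d by omega)
    have hq1 : 1 ≤ m / d := Nat.div_pos hdm (by omega)
    have hsplit := cols_split m d χ hd2 hdm hsy
    rcases hq1.lt_or_eq with hq | hq
    · have h2d : d * 2 ≤ m := mul_le_of_le_div (x := 2) hq
      have hnd : ∀ x : ℕ, 1 ≤ x → x ≤ d - 1 → ¬ (d : ℤ) ∣ x := by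
        intro x _ _ h'
        have := Int.le_of_dvd (by omega) h'
        omega
      have i1 := strong_upper (d - 1) χ (RF_mono hr (by omega)) (by
        intro a b h1 h2 h3
        by_cases hab : a = b
        · subst hab
          rintro ⟨-, h4⟩
          have e1 : χ a = χ (a + d) :=
            hsy a (a + d) h1 (by omega) (by omega) (by omega) (hnd a h1 (by omega))
              (Or.inl ⟨-1, by push_cast; ring⟩)
          have e2 : χ (a + a) = χ (a + (a + d)) :=
            hsy (a + a) (a + (a + d)) (by omega) (by omega) (by omega) (by omega)
              (hnd (a + a) (by omega) (by omega)) (Or.inl ⟨-1, by push_cast; ring⟩)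
          exact hs a (a + d) h1 (by omega) (by omega) (by omega) ⟨e1, by rw [← e1, ← e2, h4]⟩
        · exact hs a b h1 h2 hab (by omega))
      have i2 := ih (m / d) (Nat.div_lt_self (by omega) (by omega)) (fun x => χ (d * x))
        (RF_div hr (by omega)) (by
          intro a b h1 h2 hab h3
          have := mul_le_of_le_div h3
          have := hs (d * a) (d * b) (Nat.mul_pos (by omega) h1) (Nat.mul_pos (by omega) h2)
            (by intro h'; exact hab (Nat.eq_of_mul_eq_mul_left (by omega) h'))
            (by linarith)
          simpa [mul_add] using this)
      have hdisj : Disjoint (cols (d - 1) χ) (cols (m / d) (fun x => χ (d * x))) := by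
        rw [Finset.disjoint_left]
        intro i h1 h2
        obtain ⟨x, hx1, hx2, rfl⟩ := mem_cols.1 h1
        obtain ⟨k, hk1, hk2, hk⟩ := mem_cols.1 h2
        have hkm := mul_le_of_le_div hk2
        have hdk : d * 1 ≤ d * k := Nat.mul_le_mul_left d hk1
        have hx : ¬ (d : ℤ) ∣ x := hnd x hx1 hx2
        by_cases hxx : x = d * k - x
        · have hk1' : k = 1 := by
            by_contra hne
            have : d * 2 ≤ d * k := Nat.mul_le_mul_left d (by omega)
            omega
          subst hk1'
          rw [mul_one] at *
          have e : χ x = χ (x + d) :=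
            hsy x (x + d) hx1 (by omega) (by omega) (by omega) hx
              (Or.inl ⟨-1, by push_cast; ring⟩)
          exact hs x d hx1 (by omega) (by omega) (by omega) ⟨hk.symm, by rw [hk, e]⟩
        have e : χ x = χ (d * k - x) := by
          apply hsy x (d * k - x) hx1 (by omega) (by omega) (by omega) hx
          right
          refine ⟨k, ?_⟩
          push_cast [Nat.cast_sub (show x ≤ d * k by omega)]
          ring
        apply hs x (d * k - x) hx1 (by omega) hxx (by omega)
        rw [show x + (d * k - x) = d * k by omega]
        exact ⟨e, by rw [← e, hk]⟩
      rw [hsplit, Finset.card_union_of_disjoint hdisj]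
      refine le_trans ?_ (fg_mul _ _ (cols_pos (by omega)) (cols_pos (by omega)))
      calc m + 1 ≤ d * (m / d + 1) := hlt
        _ ≤ _ := Nat.mul_le_mul (by omega) i2
    · rw [← hq] at hlt hsplit
      have hD : (cols 1 (fun x => χ (d * x))).card ≤ 1 :=
        (Finset.card_image_le).trans (by simp)
      have hU := Finset.card_union_le (cols (d - 1) χ) (cols 1 (fun x => χ (d * x)))
      rw [← hsplit] at hU
      have hA : (cols (d - 1) χ).card = 2 := by omega
      have hT : (cols m χ).card = 3 := by omega
      have i1 := ih (d - 1) (by omega) χ (RF_mono hr (by omega))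
        (fun a b h1 h2 hab h3 => hs a b h1 h2 hab (by omega))
      rw [hA] at i1
      rw [hT]
      simp only [g, f] at *
      omega

lemma strong_le {m r : ℕ} {χ : ℕ → ℕ} (h : StrongGS m (Finset.Icc 1 r) χ) : m + 1 ≤ f r := by
  obtain ⟨h1, h2, h3, h4⟩ := h
  simp only [Finset.mem_Icc] at *
  have hc : cols m χ = Finset.Icc 1 r := by
    ext i; rw [mem_cols, Finset.mem_Icc]
    constructor
    · rintro ⟨x, hx, hx', rfl⟩; exact h1 x ⟨hx, hx'⟩
    · intro hi; obtain ⟨x, hx, rfl⟩ := h2 i hi; exact ⟨x, hx.1, hx.2, rfl⟩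
  have := strong_upper m χ
    (by intro a b ha hb hab
        have := h4 a (by omega) b (by omega) (a + b) (by omega) rfl
        tauto)
    (by intro a b ha hb hab
        exact h3 a (by omega) b (by omega) (a + b) (by omega) rfl)
  rw [hc] at this
  simpa using this

lemma weak_le {m r : ℕ} {χ : ℕ → ℕ} (h : WeakGS m (Finset.Icc 1 r) χ) : m + 1 ≤ g r := by
  obtain ⟨h1, h2, h3, h4⟩ := h
  simp only [Finset.mem_Icc] at *
  have hc : cols m χ = Finset.Icc 1 r := by
    ext i; rw [mem_cols, Finset.mem_Icc]
    constructor
    · rintro ⟨x, hx, hx', rfl⟩; exact h1 x ⟨hx, hx'⟩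
    · intro hi; obtain ⟨x, hx, rfl⟩ := h2 i hi; exact ⟨x, hx.1, hx.2, rfl⟩
  have := weak_upper m χ
    (by intro a b ha hb hab
        have := h4 a (by omega) b (by omega) (a + b) (by omega) rfl
        tauto)
    (by intro a b ha hb hne hab
        exact h3 a (by omega) b (by omega) (a + b) (by omega) rfl hne (by omega) (by omega))
  rw [hc] at this
  simpa using this

/-- existence of a coloring of `[1, N - 1]`, in bundled form; `w` says whether the weak
version is meant -/
def Ex (w : Prop) (N r : ℕ) : Prop :=
  1 ≤ N ∧ ∃ χ : ℕ → ℕ, (∀ x, 1 ≤ x → x < N → 1 ≤ χ x ∧ χ x ≤ r) ∧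
    (∀ i, 1 ≤ i → i ≤ r → ∃ x, 1 ≤ x ∧ x < N ∧ χ x = i) ∧
    (∀ a b, 1 ≤ a → 1 ≤ b → a + b < N → (w → a ≠ b) → ¬ (χ a = χ b ∧ χ b = χ (a + b))) ∧
    (∀ a b, 1 ≤ a → 1 ≤ b → a + b < N → χ a = χ b ∨ χ a = χ (a + b) ∨ χ b = χ (a + b))

lemma ex_five (w : Prop) (N r : ℕ) (h : Ex w N r) : Ex w (5 * N) (r + 2) := by
  obtain ⟨hN, χ, h1, h2, h3, h4⟩ := h
  refine ⟨by omega, fun x => if x % 5 = 0 then χ (x / 5) else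
    if x % 5 = 1 ∨ x % 5 = 4 then r + 1 else r + 2, ?_, ?_, ?_, ?_⟩
  · intro x hx1 hx2
    dsimp only
    have := h1 (x / 5)
    split_ifs <;> omega
  · intro i hi1 hi2
    by_cases hi : i ≤ r
    · obtain ⟨x, hx1, hx2, hx⟩ := h2 i hi1 hi
      refine ⟨5 * x, by omega, by omega, ?_⟩
      simp [hx]
    · by_cases hi' : i = r + 1
      · exact ⟨1, by omega, by omega, by simp [hi']⟩
      · exact ⟨2, by omega, by omega, by simp; omega⟩
  · intro a b ha hb hab hw
    dsimp only
    have ka := h1 (a / 5)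
    have kb := h1 (b / 5)
    have kc := h1 ((a + b) / 5)
    by_cases h5 : a % 5 = 0 ∧ b % 5 = 0
    · have k := h3 (a / 5) (b / 5) (by omega) (by omega) (by omega) (fun h' => by
        have := hw h'; omega)
      rw [show a / 5 + b / 5 = (a + b) / 5 by omega] at k
      rw [if_pos h5.1, if_pos h5.2, if_pos (by omega)]
      exact k
    · split_ifs <;> omega
  · intro a b ha hb hab
    dsimp only
    by_cases h5 : a % 5 = 0 ∧ b % 5 = 0
    · have k := h4 (a / 5) (b / 5) (by omega) (by omega) (by omega)
      rw [show a / 5 + b / 5 = (a + b) / 5 by omega] at k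
      rw [if_pos h5.1, if_pos h5.2, if_pos (by omega)]
      exact k
    · split_ifs <;> omega

lemma ex_two (w : Prop) (N r : ℕ) (h : Ex w N r) : Ex w (2 * N) (r + 1) := by
  obtain ⟨hN, χ, h1, h2, h3, h4⟩ := h
  refine ⟨by omega, fun x => if x % 2 = 0 then χ (x / 2) else r + 1, ?_, ?_, ?_, ?_⟩
  · intro x hx1 hx2
    dsimp only
    have := h1 (x / 2)
    split_ifs <;> omega
  · intro i hi1 hi2
    by_cases hi : i ≤ r
    · obtain ⟨x, hx1, hx2, hx⟩ := h2 i hi1 hi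
      refine ⟨2 * x, by omega, by omega, ?_⟩
      simp [hx]
    · exact ⟨1, by omega, by omega, by simp; omega⟩
  · intro a b ha hb hab hw
    dsimp only
    have ka := h1 (a / 2)
    have kb := h1 (b / 2)
    have kc := h1 ((a + b) / 2)
    by_cases h5 : a % 2 = 0 ∧ b % 2 = 0
    · have k := h3 (a / 2) (b / 2) (by omega) (by omega) (by omega) (fun h' => by
        have := hw h'; omega)
      rw [show a / 2 + b / 2 = (a + b) / 2 by omega] at k
      rw [if_pos h5.1, if_pos h5.2, if_pos (by omega)]
      exact k
    · split_ifs <;> omega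
  · intro a b ha hb hab
    dsimp only
    by_cases h5 : a % 2 = 0 ∧ b % 2 = 0
    · have k := h4 (a / 2) (b / 2) (by omega) (by omega) (by omega)
      rw [show a / 2 + b / 2 = (a + b) / 2 by omega] at k
      rw [if_pos h5.1, if_pos h5.2, if_pos (by omega)]
      exact k
    · split_ifs <;> omega

lemma ex_zero : Ex False 1 0 :=
  ⟨le_rfl, fun _ => 1, by intros; omega, by intros; omega, by intros; omega, by intros; omega⟩

lemma ex_nine : Ex True 9 2 := by
  refine ⟨by omega, fun x => if x = 1 ∨ x = 2 ∨ x = 4 ∨ x = 8 then 1 else 2, ?_, ?_, ?_, ?_⟩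
  · intro x _ _
    dsimp only
    split_ifs <;> omega
  · intro i h1 h2
    interval_cases i
    · exact ⟨1, by simp⟩
    · exact ⟨3, by simp⟩
  · intro a b ha hb hab hw
    have := hw trivial
    dsimp only
    split_ifs <;> omega
  · intro a b ha hb hab
    dsimp only
    split_ifs <;> omega

lemma ex_strong (r : ℕ) : Ex False (f r) r := by
  induction r using f.induct with
  | case1 => exact ex_zero
  | case2 => exact ex_two _ _ _ ex_zero
  | case3 n ih => exact ex_five _ _ _ ih

lemma ex_weak (r : ℕ) : Ex True (9 * f r) (r + 2) := by
  induction r using f.induct with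
  | case1 => exact ex_nine
  | case2 => exact ex_two _ _ _ ex_nine
  | case3 n ih =>
    have := ex_five _ _ _ ih
    rw [show 5 * (9 * f n) = 9 * f (n + 2) by simp only [f]; ring] at this
    exact this

lemma GS_eq (r : ℕ) : GS r = f r := by
  have hp := f_pos r
  apply le_antisymm
  · apply Nat.sInf_le
    intro m hm χ h
    have := strong_le h
    omega
  · apply le_csInf
    · refine ⟨f r, ?_⟩
      intro m hm χ h
      have := strong_le h
      omega
    · intro n hn
      by_contra hlt
      obtain ⟨-, χ, h1, h2, h3, h4⟩ := ex_strong r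
      apply hn (f r - 1) (by omega) χ
      simp only [StrongGS, Finset.mem_Icc]
      refine ⟨?_, ?_, ?_, ?_⟩
      · intro x hx; exact h1 x hx.1 (by omega)
      · intro i hi
        obtain ⟨x, hx1, hx2, hx⟩ := h2 i hi.1 hi.2
        exact ⟨x, ⟨hx1, by omega⟩, hx⟩
      · rintro a ha b hb c hc rfl
        exact h3 a b ha.1 hb.1 (by omega) (by simp)
      · rintro a ha b hb c hc rfl
        have := h4 a b ha.1 hb.1 (by omega)
        tauto

lemma WGS_eq (r : ℕ) : WGS (r + 2) = 9 * f r := by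
  have hp := f_pos r
  have hg : g (r + 2) = 9 * f r := rfl
  apply le_antisymm
  · apply Nat.sInf_le
    intro m hm χ h
    have := weak_le h
    omega
  · apply le_csInf
    · refine ⟨9 * f r, ?_⟩
      intro m hm χ h
      have := weak_le h
      omega
    · intro n hn
      by_contra hlt
      obtain ⟨-, χ, h1, h2, h3, h4⟩ := ex_weak r
      apply hn (9 * f r - 1) (by omega) χ
      simp only [WeakGS, Finset.mem_Icc]
      refine ⟨?_, ?_, ?_, ?_⟩
      · intro x hx; exact h1 x hx.1 (by omega)
      · intro i hi
        obtain ⟨x, hx1, hx2, hx⟩ := h2 i hi.1 hi.2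
        exact ⟨x, ⟨hx1, by omega⟩, hx⟩
      · rintro a ha b hb c hc rfl hab - -
        exact h3 a b ha.1 hb.1 (by omega) (fun _ => hab)
      · rintro a ha b hb c hc rfl
        have := h4 a b ha.1 hb.1 (by omega)
        tauto

end GSProof

/-- For every integer `r > 1`, `5 · WGS r = 9 · GS r`, where `GS` and `WGS` are
the strong and weak Gallai–Schur numbers. -/
theorem five_WGS_eq_nine_GS (r : ℕ) (hr : 1 < r) :
    5 * WGS r = 9 * GS r := by
  obtain ⟨n, rfl⟩ := Nat.exists_eq_add_of_le' (show 2 ≤ r by omega)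
  rw [GSProof.WGS_eq, GSProof.GS_eq]
  simp only [GSProof.f]
  ring
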